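/- For every n ≥ 2, every connected parity-reversing pairing on [2n] has at least n crossings; that is, b_{n,k} = 0 whenever k < n. -/

import Mathlib

/-!
In a parity-reversing pairing a chord `{a, b}` has an even number of points strictly between its
endpoints. Every other chord has 0, 1 or 2 endpoints there, and exactly one precisely when it
crosses `{a, b}`; hence every chord crosses an even number of chords. In a connected pairing with at
least two chords this number is nonzero, so it is at least 2, and summing it over the `n` chords
counts every crossing twice.
-/

open scoped Classical

/-- Asymmetric crossing of two chords: `B = {a,b}` with `a < b` starts strictly
before `C = {c,d}` and they interleave: `a < c < b < d`. -/
def CrossAsym (B C : Finset ℕ) : Prop :=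
  ∃ a b c d : ℕ, a < c ∧ c < b ∧ b < d ∧ B = {a, b} ∧ C = {c, d}

/-- Two blocks cross: `a < c < b < d` or `c < a < d < b`. -/
def Crosses (B C : Finset ℕ) : Prop := CrossAsym B C ∨ CrossAsym C B

/-- A pairing on `[2n] = {1, …, 2n}`: a partition of `{1, …, 2n}` into blocks of size 2. -/
def IsPairing (n : ℕ) (π : Finset (Finset ℕ)) : Prop :=
  (∀ B ∈ π, B.card = 2 ∧ B ⊆ Finset.Icc 1 (2 * n)) ∧
  (∀ x ∈ Finset.Icc 1 (2 * n), ∃! B, B ∈ π ∧ x ∈ B)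

/-- Number of crossings of a pairing: the number of unordered pairs of blocks that cross
(each crossing unordered pair `{B, C}` satisfies the asymmetric condition exactly once). -/
noncomputable def crNum (π : Finset (Finset ℕ)) : ℕ :=
  Set.ncard {p : Finset ℕ × Finset ℕ | p.1 ∈ π ∧ p.2 ∈ π ∧ CrossAsym p.1 p.2}

/-- A pairing is parity-reversing if each block consists of one odd and one even number. -/
def ParityReversing (π : Finset (Finset ℕ)) : Prop :=
  ∀ B ∈ π, ∃ a b : ℕ, B = {a, b} ∧ Odd a ∧ Even b

/-- A pairing is connected if its blocks cannot be split into two nonempty families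
with no crossing between the families. -/
def ConnectedPairing (π : Finset (Finset ℕ)) : Prop :=
  ¬ ∃ S T : Finset (Finset ℕ), S ∪ T = π ∧ Disjoint S T ∧ S.Nonempty ∧ T.Nonempty ∧
      ∀ B ∈ S, ∀ C ∈ T, ¬ Crosses B C

/-- `tCount n k`: the number of pairings on `[2n]` with exactly `k` crossings. -/
noncomputable def tCount (n k : ℕ) : ℕ :=
  Set.ncard {π : Finset (Finset ℕ) | IsPairing n π ∧ crNum π = k}

/-- `rCount n k`: the number of parity-reversing pairings on `[2n]` with exactly `k` crossings. -/
noncomputable def rCount (n k : ℕ) : ℕ :=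
  Set.ncard {π : Finset (Finset ℕ) | IsPairing n π ∧ ParityReversing π ∧ crNum π = k}

/-- `bCount n k`: the number of connected parity-reversing pairings on `[2n]`
with exactly `k` crossings. -/
noncomputable def bCount (n k : ℕ) : ℕ :=
  Set.ncard {π : Finset (Finset ℕ) |
    IsPairing n π ∧ ParityReversing π ∧ ConnectedPairing π ∧ crNum π = k}

/-- `bTot n`: the number of connected parity-reversing pairings on `[2n]` (equals 1 for `n = 0`). -/
noncomputable def bTot (n : ℕ) : ℕ :=
  Set.ncard {π : Finset (Finset ℕ) |
    IsPairing n π ∧ ParityReversing π ∧ ConnectedPairing π}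

/-- The Touchard alternating sum `∑_{k=-n}^n (-1)^k q^{k(k-1)/2} C(2n, n+k)`. -/
noncomputable def touchardSum (n : ℕ) (q : ℂ) : ℂ :=
  ∑ k ∈ Finset.Icc (-(n : ℤ)) (n : ℤ),
    (-1 : ℂ) ^ k * q ^ ((k * (k - 1)) / 2).toNat * ((2 * n).choose ((n : ℤ) + k).toNat : ℂ)

/-- `T_n(q) = ∑_k t_{n,k} q^k` as a complex polynomial function
(all crossing numbers of pairings on `[2n]` satisfy `k ≤ n*n`). -/
noncomputable def Tpoly (n : ℕ) (q : ℂ) : ℂ :=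
  ∑ k ∈ Finset.range (n * n + 1), (tCount n k : ℂ) * q ^ k

/-- `T_n(q) = ∑_k t_{n,k} q^k` as a real polynomial function. -/
noncomputable def TpolyR (n : ℕ) (q : ℝ) : ℝ :=
  ∑ k ∈ Finset.range (n * n + 1), (tCount n k : ℝ) * q ^ k

/-- `R_n(q) = ∑_k r_{n,k} q^k` as a real polynomial function. -/
noncomputable def RpolyR (n : ℕ) (q : ℝ) : ℝ :=
  ∑ k ∈ Finset.range (n * n + 1), (rCount n k : ℝ) * q ^ k

/-- Non-crossing partitions of `{1, …, 2n}` all of whose blocks have even size. -/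
noncomputable def NCEvenPartitions (n : ℕ) : Finset (Finset (Finset ℕ)) :=
  ((Finset.Icc 1 (2 * n)).powerset.powerset).filter (fun π =>
    (∀ B ∈ π, B.Nonempty ∧ Even B.card) ∧
    (∀ x ∈ Finset.Icc 1 (2 * n), ∃! B, B ∈ π ∧ x ∈ B) ∧
    ¬ ∃ a b c d : ℕ, a < b ∧ b < c ∧ c < d ∧
        ∃ B ∈ π, ∃ C ∈ π, B ≠ C ∧ a ∈ B ∧ c ∈ B ∧ b ∈ C ∧ d ∈ C)

lemma finset_pair_eq_pair_iff {α : Type*} [DecidableEq α] {a b c d : α} :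
    ({a, b} : Finset α) = {c, d} ↔ a = c ∧ b = d ∨ a = d ∧ b = c := by
  rw [← Finset.coe_inj, Finset.coe_pair, Finset.coe_pair, Set.pair_eq_pair_iff]

lemma finset_pair_eq_pair_iff_of_lt {α : Type*} [LinearOrder α] {a b c d : α} (hab : a < b)
    (hcd : c < d) : ({a, b} : Finset α) = {c, d} ↔ a = c ∧ b = d := by
  rw [finset_pair_eq_pair_iff, or_iff_left_iff_imp]
  rintro ⟨rfl, rfl⟩
  exact absurd hcd hab.asymm

lemma exists_lt_eq_pair_of_card_eq_two {α : Type*} [LinearOrder α] {s : Finset α}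
    (hs : s.card = 2) : ∃ a b, a < b ∧ s = {a, b} := by
  obtain ⟨a, b, hne, rfl⟩ := Finset.card_eq_two.mp hs
  rcases hne.lt_or_gt with hab | hba
  · exact ⟨a, b, hab, rfl⟩
  · exact ⟨b, a, hba, Finset.pair_comm a b⟩

section Chords

variable {a b c d : ℕ}

lemma crossAsym_pair_iff (hab : a < b) (hcd : c < d) :
    CrossAsym {a, b} {c, d} ↔ a < c ∧ c < b ∧ b < d := by
  constructor
  · rintro ⟨a', b', c', d', hac, hcb, hbd, hB, hC⟩
    obtain ⟨rfl, rfl⟩ := (finset_pair_eq_pair_iff_of_lt hab (hac.trans hcb)).mp hB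
    obtain ⟨rfl, rfl⟩ := (finset_pair_eq_pair_iff_of_lt hcd (hcb.trans hbd)).mp hC
    exact ⟨hac, hcb, hbd⟩
  · rintro ⟨hac, hcb, hbd⟩
    exact ⟨a, b, c, d, hac, hcb, hbd, rfl, rfl⟩

lemma CrossAsym.not_crossAsym {B C : Finset ℕ} (h : CrossAsym B C) : ¬ CrossAsym C B := by
  obtain ⟨a, b, c, d, hac, hcb, hbd, rfl, rfl⟩ := h
  rw [crossAsym_pair_iff (hcb.trans hbd) (hac.trans hcb)]
  omega

lemma crosses_pair_iff_odd_card_inter_Ioo (hab : a < b) {C : Finset ℕ} (hC : C.card = 2)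
    (h : C = {a, b} ∨ a ∉ C ∧ b ∉ C) :
    Crosses {a, b} C ↔ Odd (Finset.Ioo a b ∩ C).card := by
  obtain ⟨c, d, hcd, rfl⟩ := exists_lt_eq_pair_of_card_eq_two hC
  have hcard : (Finset.Ioo a b ∩ {c, d}).card =
      (if a < c ∧ c < b then 1 else 0) + (if a < d ∧ d < b then 1 else 0) := by
    rw [Finset.inter_comm, ← Finset.filter_mem_eq_inter, Finset.card_filter,
      Finset.sum_pair hcd.ne]
    simp only [Finset.mem_Ioo]
  rw [finset_pair_eq_pair_iff_of_lt hcd hab] at h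
  simp only [Finset.mem_insert, Finset.mem_singleton] at h
  rw [Crosses, crossAsym_pair_iff hab hcd, crossAsym_pair_iff hcd hab, hcard, Nat.odd_iff]
  grind

lemma ParityReversing.even_card_Ioo {π : Finset (Finset ℕ)} (hpar : ParityReversing π)
    (hB : {a, b} ∈ π) : Even (Finset.Ioo a b).card := by
  obtain ⟨x, y, hxy, hx, hy⟩ := hpar _ hB
  rw [finset_pair_eq_pair_iff] at hxy
  rw [Nat.card_Ioo]
  grind

end Chords

/-- The number of blocks of `π` crossing `B`: the degree of `B` in the crossing graph of `π`. -/
noncomputable def crossingDegree (π : Finset (Finset ℕ)) (B : Finset ℕ) : ℕ :=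
  (π.filter (Crosses B)).card

lemma crNum_eq_sum_card_crossAsym (π : Finset (Finset ℕ)) :
    crNum π = ∑ B ∈ π, (π.filter (CrossAsym B)).card := by
  have hset : {p : Finset ℕ × Finset ℕ | p.1 ∈ π ∧ p.2 ∈ π ∧ CrossAsym p.1 p.2} =
      ((π ×ˢ π).filter fun p => CrossAsym p.1 p.2) := by
    ext p
    simp [and_assoc]
  rw [crNum, hset, Set.ncard_coe_finset, Finset.card_filter, Finset.sum_product]
  simp only [Finset.card_filter]

lemma crossingDegree_eq_add (π : Finset (Finset ℕ)) (B : Finset ℕ) :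
    crossingDegree π B =
      (π.filter (CrossAsym B)).card + (π.filter fun C => CrossAsym C B).card := by
  rw [crossingDegree, ← Finset.card_union_of_disjoint
    (Finset.disjoint_filter.mpr fun _ _ h => CrossAsym.not_crossAsym h)]
  congr 1
  ext C
  simp only [Crosses, Finset.mem_filter, Finset.mem_union, and_or_left]

theorem sum_crossingDegree_eq_two_mul_crNum (π : Finset (Finset ℕ)) :
    ∑ B ∈ π, crossingDegree π B = 2 * crNum π := by
  have hswap : ∑ B ∈ π, (π.filter (CrossAsym B)).card =
      ∑ B ∈ π, (π.filter fun C => CrossAsym C B).card :=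
    Finset.sum_card_bipartiteAbove_eq_sum_card_bipartiteBelow CrossAsym
  simp only [crossingDegree_eq_add]
  rw [Finset.sum_add_distrib, ← hswap, ← crNum_eq_sum_card_crossAsym, two_mul]

lemma ConnectedPairing.exists_crosses {π : Finset (Finset ℕ)} (hconn : ConnectedPairing π)
    (hπ : π.Nontrivial) {B : Finset ℕ} (hB : B ∈ π) : ∃ C ∈ π, Crosses B C := by
  by_contra! hisolated
  refine hconn ⟨{B}, π.erase B, ?_, by simp, by simp, hπ.erase_nonempty, ?_⟩
  · rw [← Finset.insert_eq, Finset.insert_erase hB]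
  · intro B' hB' C hC
    rw [Finset.mem_singleton.mp hB']
    exact hisolated C (Finset.mem_of_mem_erase hC)

namespace IsPairing

variable {n : ℕ} {π : Finset (Finset ℕ)}

lemma sum_card_inter (hπ : IsPairing n π) {s : Finset ℕ} (hs : s ⊆ Finset.Icc 1 (2 * n)) :
    ∑ B ∈ π, (s ∩ B).card = s.card := by
  rw [← mul_one s.card]
  refine Finset.sum_card_inter fun x hx => ?_
  rw [Finset.card_eq_one_iff_existsUnique]
  simpa only [Finset.mem_filter] using hπ.2 x (hs hx)

lemma card_eq (hπ : IsPairing n π) : π.card = n := by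
  have hsum : ∑ B ∈ π, (Finset.Icc 1 (2 * n) ∩ B).card = π.card * 2 :=
    Finset.sum_const_nat fun B hB => by
      rw [Finset.inter_eq_right.mpr (hπ.1 B hB).2, (hπ.1 B hB).1]
  rw [hπ.sum_card_inter subset_rfl, Nat.card_Icc] at hsum
  omega

lemma nontrivial (hπ : IsPairing n π) (hn : 2 ≤ n) : π.Nontrivial := by
  rwa [← Finset.one_lt_card_iff_nontrivial, hπ.card_eq]

lemma eq_of_mem (hπ : IsPairing n π) {B C : Finset ℕ} (hB : B ∈ π) (hC : C ∈ π) {x : ℕ}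
    (hxB : x ∈ B) (hxC : x ∈ C) : B = C :=
  (hπ.2 x ((hπ.1 B hB).2 hxB)).unique ⟨hB, hxB⟩ ⟨hC, hxC⟩

theorem even_crossingDegree_iff (hπ : IsPairing n π) {a b : ℕ} (hab : a < b)
    (hB : {a, b} ∈ π) : Even (crossingDegree π {a, b}) ↔ Even (Finset.Ioo a b).card := by
  have ha : a ∈ ({a, b} : Finset ℕ) := Finset.mem_insert_self a {b}
  have hb : b ∈ ({a, b} : Finset ℕ) := Finset.mem_insert_of_mem (Finset.mem_singleton_self b)
  have hIoo : Finset.Ioo a b ⊆ Finset.Icc 1 (2 * n) :=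
    Finset.Ioo_subset_Icc_self.trans <| Finset.Icc_subset_Icc
      (Finset.mem_Icc.mp ((hπ.1 _ hB).2 ha)).1 (Finset.mem_Icc.mp ((hπ.1 _ hB).2 hb)).2
  have hcross : ∀ C ∈ π, (Crosses {a, b} C ↔ Odd (Finset.Ioo a b ∩ C).card) := fun C hC =>
    crosses_pair_iff_odd_card_inter_Ioo hab (hπ.1 C hC).1 <| or_iff_not_imp_left.mpr fun hne =>
      ⟨fun haC => hne (hπ.eq_of_mem hC hB haC ha), fun hbC => hne (hπ.eq_of_mem hC hB hbC hb)⟩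
  rw [← hπ.sum_card_inter hIoo, Finset.even_sum_iff_even_card_odd, crossingDegree,
    Finset.filter_congr hcross]

lemma even_crossingDegree (hπ : IsPairing n π) (hpar : ParityReversing π) {B : Finset ℕ}
    (hB : B ∈ π) : Even (crossingDegree π B) := by
  obtain ⟨a, b, hab, rfl⟩ := exists_lt_eq_pair_of_card_eq_two (hπ.1 B hB).1
  exact (hπ.even_crossingDegree_iff hab hB).mpr (hpar.even_card_Ioo hB)

theorem le_crNum (hπ : IsPairing n π) (hpar : ParityReversing π)
    (hcross : ∀ B ∈ π, ∃ C ∈ π, Crosses B C) : n ≤ crNum π := by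
  have two_le (B) (hB : B ∈ π) : 2 ≤ crossingDegree π B :=
    Nat.le_of_dvd (Finset.card_pos.mpr (Finset.filter_nonempty_iff.mpr (hcross B hB)))
      (hπ.even_crossingDegree hpar hB).two_dvd
  have hle : π.card • 2 ≤ ∑ B ∈ π, crossingDegree π B := Finset.card_nsmul_le_sum π _ 2 two_le
  rw [hπ.card_eq, smul_eq_mul, sum_crossingDegree_eq_two_mul_crNum] at hle
  omega

end IsPairing

/-- Every connected parity-reversing pairing on `[2n]` (`n ≥ 2`) has at least `n` crossings;
that is, `b_{n,k} = 0` whenever `k < n`. -/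
theorem bCount_eq_zero_of_lt (n : ℕ) (hn : 2 ≤ n) :
    (∀ π : Finset (Finset ℕ), IsPairing n π → ParityReversing π → ConnectedPairing π →
      n ≤ crNum π) ∧
    (∀ k : ℕ, k < n → bCount n k = 0) := by
  have le_crNum (π : Finset (Finset ℕ)) (hπ : IsPairing n π) (hpar : ParityReversing π)
      (hconn : ConnectedPairing π) : n ≤ crNum π :=
    hπ.le_crNum hpar fun _ hB => hconn.exists_crosses (hπ.nontrivial hn) hB
  refine ⟨le_crNum, fun k hk =>
    (congrArg Set.ncard (Set.eq_empty_of_forall_notMem ?_)).trans (Set.ncard_empty _)⟩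
  rintro π ⟨hπ, hpar, hconn, rfl⟩
  exact hk.not_ge (le_crNum π hπ hpar hconn)
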